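/- The ℚ-linear map X satisfies: (i) X∘X = X + id; (ii) X is self-adjoint with respect to s, i.e. s(Xa, b) = s(a, Xb) for all a, b ∈ V; (iii) X commutes with σ₅ and with σ₂ (hence with the whole icosahedral A₅-action they generate); (iv) X(ε) = ε + e. -/

import Mathlib

/-- Index type for the basis `e, e₀, …, e₄` of `V`: `none ↦ e`, `some i ↦ eᵢ`. -/
abbrev J5 := Option (ZMod 5)

/-- The 6-dimensional `ℚ`-vector space `V` with basis indexed by `J5`. -/
abbrev V := J5 → ℚ

/-- The basis vector of `V` with index `j`. -/
def bvec : J5 → V := fun j => Pi.single j 1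

/-- The basis vector `e`. -/
def eV : V := Pi.single none 1

/-- The basis vectors `eᵢ`, `i ∈ ℤ/5`. -/
def ee (i : ZMod 5) : V := Pi.single (some i) 1

/-- The symmetric bilinear form on `V` for which the basis `e, e₀, …, e₄` is orthonormal. -/
def sform (x y : V) : ℚ := ∑ j : J5, x j * y j

/-- `ε = ½(e + e₀ + e₁ + e₂ + e₃ + e₄)`. -/
def eps : V := (1 / 2 : ℚ) • (eV + ∑ i : ZMod 5, ee i)

/-- The `ℚ`-linear map `X : V → V` determined by `X(e) = ε` and
`X(eᵢ) = ε − e_{i+2} − e_{i−2}` (indices mod 5); in coordinates,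
`(X x)(j) = (Σ_t x_t)/2`, minus `x_{k−2} + x_{k+2}` when `j = some k`. -/
def Xmap : V →ₗ[ℚ] V where
  toFun x := fun j =>
    (∑ t : J5, x t) / 2 +
      (match j with
        | none => 0
        | some k => -(x (some (k - 2))) - x (some (k + 2)))
  map_add' x y := by
    funext j
    rcases j with _ | k <;> simp [Finset.sum_add_distrib] <;> ring
  map_smul' c x := by
    funext j
    have hs : (∑ i : ZMod 5, c * x (some i)) = c * ∑ i : ZMod 5, x (some i) :=
      (Finset.mul_sum _ _ _).symm
    rcases j with _ | k <;> simp <;> rw [hs] <;> ring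

/-- Index rotation `some i ↦ some (i+1)`, `none ↦ none`. -/
def rotIdx : J5 ≃ J5 := Equiv.optionCongr (Equiv.addRight (1 : ZMod 5))

/-- `σ₅ : V ≃ V`, with `σ₅(e) = e` and `σ₅(eᵢ) = e_{i+1}`. -/
def s5 : V ≃ₗ[ℚ] V := LinearEquiv.funCongrLeft ℚ ℚ rotIdx.symm

/-- Index involution underlying `σ₂`. -/
def t2 : J5 → J5
  | none => some 0
  | some i => if i = 0 then none else if i = 1 then some 4 else if i = 4 then some 1 else some i

/-- Sign function underlying `σ₂`. -/
def sg2 : J5 → ℚ := fun j => if j = some 2 ∨ j = some 3 then -1 else 1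

/-- The function underlying `σ₂`. -/
def s2fun : V → V := fun x j => sg2 j * x (t2 j)

lemma t2_invol : ∀ j, t2 (t2 j) = j := by decide

lemma sg2_mul : ∀ j, sg2 j * sg2 (t2 j) = 1 := by
  intro j
  rcases j with _ | i
  · simp (config := { decide := true }) [sg2, t2]
  · fin_cases i <;> simp (config := { decide := true }) [sg2, t2]

lemma s2fun_invol : Function.Involutive s2fun := by
  intro x
  funext j
  show sg2 j * (sg2 (t2 j) * x (t2 (t2 j))) = x j
  rw [t2_invol, ← mul_assoc, sg2_mul, one_mul]

/-- `σ₂ : V ≃ V`, with `σ₂(e) = e₀`, `σ₂(e₀) = e`, `σ₂(e₁) = e₄`, `σ₂(e₄) = e₁`,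
`σ₂(e₂) = −e₂`, `σ₂(e₃) = −e₃`. -/
def s2 : V ≃ₗ[ℚ] V where
  toFun := s2fun
  invFun := s2fun
  left_inv := s2fun_invol
  right_inv := s2fun_invol
  map_add' x y := by funext j; simp [s2fun, mul_add]
  map_smul' c x := by funext j; simp [s2fun]; ring

/-!
Over `ℚ` one has `X = (1 + C) / 2`, where `C` is the Paley conference matrix of the projective
line `ℙ¹(𝔽₅) = {∞} ∪ ℤ/5`: it has zero diagonal, entries `1` against `∞`, and the entry in
position `(x, y)` is the quadratic residue symbol of `x - y`. For every `q ≡ 1 mod 4` the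
analogous matrix over `𝔽_q` is symmetric with `C ^ 2 = q`, the off-diagonal entries of the square
being governed by the Jacobi sum `J(χ, χ⁻¹) = -χ(-1)`. It commutes with the translations and, up
to signs, with the inversion `x ↦ -1/x` of the projective line. For `q = 5` the translation by `1`
and the signed inversion are `σ₅` and `σ₂`, and `C ^ 2 = 5` turns into `X ^ 2 = X + 1`. Evaluated
at `e`, the latter says `X ε = ε + e`, because `X e = ε`.
-/

open Matrix

section Monomial

variable {n R : Type*}

/-- The map `v ↦ (d i * v (e i))ᵢ`, monomial when `e` is a permutation of the coordinates; signed
permutation matrices act in this way. -/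
def monomialMap [Mul R] (d : n → R) (e : n → n) (v : n → R) : n → R := fun i => d i * v (e i)

lemma mulVec_monomialMap [Fintype n] [CommSemiring R] {M : Matrix n n R} {c d : n → R} {e : n → n}
    (he : e.Bijective) (h : ∀ i j, c i * M (e i) (e j) = M i j * d j) (v : n → R) :
    M *ᵥ monomialMap d e v = monomialMap c e (M *ᵥ v) := by
  ext i
  calc ∑ j, M i j * (d j * v (e j))
      = ∑ j, c i * (M (e i) (e j) * v (e j)) := by simp only [← mul_assoc, h]
    _ = c i * ∑ j, M (e i) (e j) * v (e j) := (Finset.mul_sum ..).symm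
    _ = c i * ∑ j, M (e i) j * v j := by rw [he.sum_comp fun j => M (e i) j * v j]

end Monomial

section ProjectiveLine

variable {F : Type*}

/-- Translation by `a` on the line `F` completed by a fixed point at infinity `none`. -/
def translation [Add F] (a : F) : Option F → Option F := Option.map (· + a)

lemma translation_bijective [AddGroup F] (a : F) : (translation a).Bijective :=
  (Equiv.addRight a).optionCongr.bijective

/-- The map `x ↦ -1/x` on the projective line `Option F`, which exchanges `0` and the point at
infinity `none`. -/
def negInversion [Field F] [DecidableEq F] : Option F → Option F
  | none => some 0
  | some x => if x = 0 then none else some (-x⁻¹)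

lemma negInversion_involutive [Field F] [DecidableEq F] :
    (negInversion (F := F)).Involutive
  | none => by simp [negInversion]
  | some x => by by_cases hx : x = 0 <;> simp [negInversion, hx, inv_neg]

end ProjectiveLine

section MulChar

variable {A R : Type*} [CommMonoidWithZero R]

lemma mulChar_neg_apply [CommRing A] {χ : MulChar A R} (hχ : χ (-1) = 1) (x : A) :
    χ (-x) = χ x := by
  rw [← neg_one_mul, map_mul, hχ, one_mul]

lemma mulChar_mul_inv_apply [CommMonoid A] (χ : MulChar A R) {x : A} (hx : IsUnit x) :
    χ x * χ⁻¹ x = 1 := by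
  rw [← MulChar.mul_apply, mul_inv_cancel, MulChar.one_apply hx]

end MulChar

section CommRing

variable {A R : Type*} [CommRing A]

/-- The Paley matrix of a multiplicative character `χ`, indexed by `Option A`, which stands for
the projective line when `A` is a field. For `χ` quadratic with `χ (-1) = 1` this is then
Paley's symmetric conference matrix. -/
def paleyMatrix [CommMonoidWithZero R] (χ : MulChar A R) : Matrix (Option A) (Option A) R
  | none, none => 0
  | none, some _ => 1
  | some _, none => 1
  | some x, some y => χ (x - y)

lemma paleyMatrix_isSymm [CommMonoidWithZero R] {χ : MulChar A R} (hχ : χ (-1) = 1) :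
    (paleyMatrix χ).IsSymm := by
  refine Matrix.IsSymm.ext ?_
  rintro (_ | x) (_ | y)
  · rfl
  · rfl
  · rfl
  · simpa only [neg_sub, paleyMatrix] using mulChar_neg_apply hχ (x - y)

lemma paleyMatrix_translation [CommMonoidWithZero R] (χ : MulChar A R) (a : A)
    (i j : Option A) :
    paleyMatrix χ (translation a i) (translation a j) = paleyMatrix χ i j := by
  rcases i with _ | x <;> rcases j with _ | y <;> simp [translation, paleyMatrix]

lemma paleyMatrix_mulVec_none [CommSemiring R] [Fintype A] (χ : MulChar A R)
    (v : Option A → R) :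
    (paleyMatrix χ *ᵥ v) none = ∑ y, v (some y) := by
  simp [mulVec, dotProduct, paleyMatrix]

lemma paleyMatrix_mulVec_some [CommSemiring R] [Fintype A] (χ : MulChar A R)
    (v : Option A → R) (x : A) :
    (paleyMatrix χ *ᵥ v) (some x) = v none + ∑ y, χ (x - y) * v (some y) := by
  simp [mulVec, dotProduct, paleyMatrix]

end CommRing

section Field

variable {F R : Type*} [Field F]

/-- The weights that turn the map `x ↦ -1/x` of the projective line into a monomial symmetry of the
Paley matrix: `χ x` at `x ≠ 0`, and `1` at `0` and at infinity. -/
def inversionWeight [CommMonoidWithZero R] [DecidableEq F] (χ : MulChar F R) : Option F → R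
  | none => 1
  | some x => if x = 0 then 1 else χ x

lemma paleyMatrix_negInversion [CommMonoidWithZero R] [DecidableEq F] {χ : MulChar F R}
    (hχ : χ (-1) = 1) (i j : Option F) :
    inversionWeight χ i * paleyMatrix χ (negInversion i) (negInversion j) =
      paleyMatrix χ i j * inversionWeight χ⁻¹ j := by
  have χ_neg (x : F) : χ (-x) = χ x := mulChar_neg_apply hχ x
  have χ_mul_χ_inv {x : F} (hx : x ≠ 0) : χ x * χ x⁻¹ = 1 := by
    rw [← map_mul, mul_inv_cancel₀ hx, map_one]
  rcases i with _ | x <;> rcases j with _ | y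
  · simp [inversionWeight, paleyMatrix, negInversion, χ.map_zero]
  · by_cases hy : y = 0 <;>
      simp [inversionWeight, paleyMatrix, negInversion, hy, MulChar.inv_apply']
  · by_cases hx : x = 0 <;>
      simp [inversionWeight, paleyMatrix, negInversion, hx, χ_neg, χ_mul_χ_inv]
  · by_cases hx : x = 0 <;> by_cases hy : y = 0
    · simp [inversionWeight, paleyMatrix, negInversion, hx, hy, χ.map_zero]
    · simp [inversionWeight, paleyMatrix, negInversion, hx, hy, χ_neg, χ_mul_χ_inv,
        MulChar.inv_apply']
    · simp [inversionWeight, paleyMatrix, negInversion, hx, hy]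
    · have difference_inversion : x * (-x⁻¹ - -y⁻¹) = (x - y) * y⁻¹ := by field_simp; ring
      simp only [inversionWeight, paleyMatrix, negInversion, hx, hy, if_false, MulChar.inv_apply',
        ← map_mul, difference_inversion]

variable [CommRing R] [Fintype F]

lemma sum_mulChar_sub_mul_inv_sub_self (χ : MulChar F R) (x : F) :
    ∑ y, χ (x - y) * χ⁻¹ (y - x) = χ (-1) * (Fintype.card F - 1) := by
  classical
  have summand (y : F) : χ (x - y) * χ⁻¹ (y - x) = χ (-1) * (1 - if y = x then 1 else 0) := by
    obtain rfl | hy := eq_or_ne y x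
    · simp [χ.map_zero]
    · rw [← neg_sub y x, ← neg_one_mul, map_mul, mul_assoc,
        mulChar_mul_inv_apply χ (sub_ne_zero.mpr hy).isUnit, if_neg hy, sub_zero]
  simp [summand, ← Finset.mul_sum]

variable [IsDomain R]

lemma sum_mulChar_sub_mul_inv_sub {χ : MulChar F R} (hχ : χ ≠ 1) {x z : F} (hxz : x ≠ z) :
    ∑ y, χ (x - y) * χ⁻¹ (y - z) = -χ (-1) := by
  have hd : x - z ≠ 0 := sub_ne_zero.mpr hxz
  have rescale (w : F) : χ (x - (x - (x - z) * w)) * χ⁻¹ (x - (x - z) * w - z) =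
      χ w * χ⁻¹ (1 - w) := by
    rw [show x - (x - (x - z) * w) = (x - z) * w by ring,
      show x - (x - z) * w - z = (x - z) * (1 - w) by ring, map_mul, map_mul, mul_mul_mul_comm,
      mulChar_mul_inv_apply χ hd.isUnit, one_mul]
  calc ∑ y, χ (x - y) * χ⁻¹ (y - z)
      = ∑ w, χ (x - (x - (x - z) * w)) * χ⁻¹ (x - (x - z) * w - z) :=
        (((Equiv.mulLeft₀ _ hd).trans (Equiv.subLeft x)).sum_comp
          fun y => χ (x - y) * χ⁻¹ (y - z)).symm
    _ = jacobiSum χ χ⁻¹ := Fintype.sum_congr _ _ rescale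
    _ = -χ (-1) := jacobiSum_nontrivial_inv hχ

lemma paleyMatrix_mul_paleyMatrix_inv [DecidableEq F] {χ : MulChar F R} (hχ : χ ≠ 1)
    (hχ' : χ (-1) = 1) :
    paleyMatrix χ * paleyMatrix χ⁻¹ = (Fintype.card F : R) • 1 := by
  have hsum (x : F) : ∑ y, χ (x - y) = 0 :=
    ((Equiv.subLeft x).sum_comp (χ ·)).trans (MulChar.sum_eq_zero_of_ne_one hχ)
  have hsum' (x : F) : ∑ y, χ⁻¹ (y - x) = 0 :=
    ((Equiv.subRight x).sum_comp (χ⁻¹ ·)).trans (MulChar.sum_eq_zero_of_ne_one (inv_ne_one.mpr hχ))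
  ext i k
  rw [mul_apply, Fintype.sum_option]
  rcases i with _ | x <;> rcases k with _ | z
  · simp [paleyMatrix]
  · simp [paleyMatrix, hsum']
  · simp [paleyMatrix, hsum]
  · obtain rfl | hxz := eq_or_ne x z
    · simp [paleyMatrix, sum_mulChar_sub_mul_inv_sub_self, hχ']
    · simp [paleyMatrix, sum_mulChar_sub_mul_inv_sub hχ hxz, hχ', hxz]

end Field

instance fact_prime_five : Fact (Nat.Prime 5) := ⟨Nat.prime_five⟩

/-- The quadratic character of `ℤ/5`, with rational values. -/
def quadraticChar5 : MulChar (ZMod 5) ℚ :=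
  (quadraticChar (ZMod 5)).ringHomComp (Int.castRingHom ℚ)

lemma quadraticChar5_eq_intCast (x : ZMod 5) :
    quadraticChar5 x = (quadraticChar (ZMod 5) x : ℚ) :=
  rfl

lemma quadraticChar5_isQuadratic : quadraticChar5.IsQuadratic :=
  (quadraticChar_isQuadratic _).comp _

lemma quadraticChar5_ne_one : quadraticChar5 ≠ 1 :=
  (MulChar.ringHomComp_ne_one_iff Int.cast_injective).mpr <|
    quadraticChar_ne_one (by rw [ZMod.ringChar_zmod_n]; decide)

lemma quadraticChar5_apply (x : ZMod 5) :
    quadraticChar5 x =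
      1 - (if x = 0 then 1 else 0) - 2 * (if x = 2 then 1 else 0) -
        2 * (if x = -2 then 1 else 0) := by
  have over_int : ∀ x : ZMod 5, quadraticChar (ZMod 5) x =
      1 - (if x = 0 then 1 else 0) - 2 * (if x = 2 then 1 else 0) -
        2 * (if x = -2 then 1 else 0) := by
    decide
  simp only [quadraticChar5_eq_intCast, over_int]
  push_cast
  rfl

lemma quadraticChar5_neg_one : quadraticChar5 (-1) = 1 := by
  have over_int : quadraticChar (ZMod 5) (-1) = 1 := by decide
  simp [quadraticChar5_eq_intCast, over_int]

lemma t2_eq_negInversion : t2 = negInversion := by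
  have inv_eq_cube {x : ZMod 5} (hx : x ≠ 0) : x⁻¹ = x ^ 3 :=
    inv_eq_of_mul_eq_one_right <| (pow_succ' x 3).symm.trans (ZMod.pow_card_sub_one_eq_one hx)
  funext j
  rcases j with _ | x
  · rfl
  · have t2_some : ∀ x : ZMod 5, t2 (some x) = if x = 0 then none else some (-x ^ 3) := by decide
    rw [t2_some, negInversion]
    split_ifs with hx
    · rfl
    · rw [inv_eq_cube hx]

lemma sg2_eq_inversionWeight : sg2 = inversionWeight quadraticChar5 := by
  have over_int : ∀ x : ZMod 5, (if x = 2 ∨ x = 3 then -1 else 1 : ℤ) =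
      if x = 0 then 1 else quadraticChar (ZMod 5) x := by
    decide
  funext j
  rcases j with _ | x
  · simp [sg2, inversionWeight]
  · simp only [sg2, inversionWeight, Option.some_inj, quadraticChar5_eq_intCast]
    exact_mod_cast over_int x

lemma s5_eq_monomialMap (v : V) : s5 v = monomialMap 1 (translation (-1)) v := by
  funext i
  rcases i with _ | i
  · exact (one_mul _).symm
  · exact (one_mul _).symm

lemma s2_eq_monomialMap (v : V) :
    s2 v = monomialMap (inversionWeight quadraticChar5) negInversion v := by
  rw [← sg2_eq_inversionWeight, ← t2_eq_negInversion]
  rfl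

lemma sum_quadraticChar5_sub_mul (f : ZMod 5 → ℚ) (k : ZMod 5) :
    ∑ y, quadraticChar5 (k - y) * f y = ∑ y, f y - f k - 2 * f (k - 2) - 2 * f (k + 2) := by
  have eq_two_iff (y : ZMod 5) : k - y = 2 ↔ y = k - 2 := by grind
  have eq_neg_two_iff (y : ZMod 5) : k - y = -2 ↔ y = k + 2 := by grind
  simp [quadraticChar5_apply, sub_mul, Finset.sum_sub_distrib, sub_eq_zero, eq_two_iff,
    eq_neg_two_iff]

lemma Xmap_apply (v : V) : Xmap v = (1 / 2 : ℚ) • (v + paleyMatrix quadraticChar5 *ᵥ v) := by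
  funext j
  rcases j with _ | k
  · calc Xmap v none
        = (∑ t, v t) / 2 + 0 := rfl
      _ = 1 / 2 * (v none + (paleyMatrix quadraticChar5 *ᵥ v) none) := by
        rw [paleyMatrix_mulVec_none, Fintype.sum_option]
        ring
  · calc Xmap v (some k)
        = (∑ t, v t) / 2 + (-v (some (k - 2)) - v (some (k + 2))) := rfl
      _ = 1 / 2 * (v (some k) + (paleyMatrix quadraticChar5 *ᵥ v) (some k)) := by
        rw [paleyMatrix_mulVec_some, sum_quadraticChar5_sub_mul fun y => v (some y),
          Fintype.sum_option]
        ring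

lemma paleyMatrix_quadraticChar5_mul_self :
    paleyMatrix quadraticChar5 * paleyMatrix quadraticChar5 = (5 : ℚ) • 1 := by
  have h := paleyMatrix_mul_paleyMatrix_inv quadraticChar5_ne_one quadraticChar5_neg_one
  rwa [quadraticChar5_isQuadratic.inv] at h

lemma Xmap_Xmap (v : V) : Xmap (Xmap v) = Xmap v + v := by
  simp only [Xmap_apply, mulVec_smul, mulVec_add, mulVec_mulVec,
    paleyMatrix_quadraticChar5_mul_self, smul_mulVec, one_mulVec]
  module

lemma sform_Xmap_left (a b : V) : sform (Xmap a) b = sform a (Xmap b) := by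
  change Xmap a ⬝ᵥ b = a ⬝ᵥ Xmap b
  have mulVec_selfAdjoint : (paleyMatrix quadraticChar5 *ᵥ a) ⬝ᵥ b =
      a ⬝ᵥ (paleyMatrix quadraticChar5 *ᵥ b) := by
    rw [dotProduct_mulVec, ← mulVec_transpose, paleyMatrix_isSymm quadraticChar5_neg_one]
  simp only [Xmap_apply, smul_dotProduct, add_dotProduct, dotProduct_smul, dotProduct_add,
    mulVec_selfAdjoint]

lemma Xmap_s5 (v : V) : Xmap (s5 v) = s5 (Xmap v) := by
  have mulVec_comm : paleyMatrix quadraticChar5 *ᵥ s5 v = s5 (paleyMatrix quadraticChar5 *ᵥ v) := by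
    simp only [s5_eq_monomialMap]
    exact mulVec_monomialMap (translation_bijective _)
      (fun i j => by simp [paleyMatrix_translation]) v
  simp only [Xmap_apply, map_smul, map_add, mulVec_comm]

lemma Xmap_s2 (v : V) : Xmap (s2 v) = s2 (Xmap v) := by
  have mulVec_comm : paleyMatrix quadraticChar5 *ᵥ s2 v = s2 (paleyMatrix quadraticChar5 *ᵥ v) := by
    simp only [s2_eq_monomialMap]
    refine mulVec_monomialMap negInversion_involutive.bijective (fun i j => ?_) v
    rw [paleyMatrix_negInversion quadraticChar5_neg_one, quadraticChar5_isQuadratic.inv]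
  simp only [Xmap_apply, map_smul, map_add, mulVec_comm]

lemma Xmap_eV : Xmap eV = eps := by
  funext j
  rcases j with _ | k <;> simp [Xmap, eps, eV, ee, Pi.single_apply]

/-- The linear map `X` satisfies `X² = X + id`, is self-adjoint with respect to `s`,
commutes with `σ₅` and `σ₂` (hence with the icosahedral `A₅`-action they generate), and
sends `ε` to `ε + e`. -/
theorem Xmap_properties :
    Xmap ∘ₗ Xmap = Xmap + LinearMap.id ∧
    (∀ a b : V, sform (Xmap a) b = sform a (Xmap b)) ∧
    (∀ v : V, Xmap (s5 v) = s5 (Xmap v)) ∧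
    (∀ v : V, Xmap (s2 v) = s2 (Xmap v)) ∧
    Xmap eps = eps + eV := by
  refine ⟨LinearMap.ext Xmap_Xmap, sform_Xmap_left, Xmap_s5, Xmap_s2, ?_⟩
  rw [← Xmap_eV, Xmap_Xmap]
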